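/- arXiv:1111.5983 — 5 statements merged into one kernel-verified Lean document; each statement's English description precedes it below -/
import Mathlib

section
/- Let O be a discrete valuation ring with fraction field K, let L₁ and L₂ be finite free O-modules of nonzero rank, and set W₁ = K ⊗_O L₁ and W₂ = K ⊗_O L₂. Let Λ ⊆ W₁ ⊗_K W₂ denote the image of the canonical map L₁ ⊗_O L₂ → W₁ ⊗_K W₂, and identify L₁ and L₂ with their images in W₁ and W₂. Suppose g is a K-linear automorphism of W₁ and h is a K-linear automorphism of W₂ with det(h) = 1, and suppose the automorphism g ⊗ h of W₁ ⊗_K W₂ maps Λ onto Λ. Then g maps L₁ onto L₁ and h maps L₂ onto L₂. Consequently, for any group P and any homomorphism ρ = (ρ₁, ρ₂) : P → GL(W₁) × SL(W₂) such that the induced tensor-product action of P on W₁ ⊗_K W₂ preserves Λ, the lattice L₁ is stable under ρ₁(P) and the lattice L₂ is stable under ρ₂(P). -/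
open scoped TensorProduct

lemma aux_basis (O : Type*) [CommRing O] [IsDomain O] [IsDiscreteValuationRing O]
    (K : Type*) [Field K] [Algebra O K] [IsFractionRing O K]
    {W : Type*} [AddCommGroup W] [Module K W]
    [Module O W] [IsScalarTower O K W] (L : Submodule O W) (hfg : L.FG)
    (hspan : Submodule.span K (L : Set W) = ⊤) :
    ∃ (n : ℕ) (b : Module.Basis (Fin n) K W),
      ∀ x, x ∈ L ↔ ∀ i, b.repr x i ∈ (algebraMap O K).range := by
  have : Submodule.IsLattice K L := ⟨hfg, hspan⟩
  have : Module.IsTorsionFree O K := inferInstance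
  have : Module.Free O L := Submodule.IsLattice.free K L
  let b := Module.finBasis O L
  refine ⟨_, b.extendOfIsLattice K, fun x => ⟨fun hx i => ?_, fun hx => ?_⟩⟩
  · refine ⟨b.repr ⟨x, hx⟩ i, ?_⟩
    have h1 : x = ∑ j, (algebraMap O K (b.repr ⟨x, hx⟩ j)) • (b.extendOfIsLattice K) j := by
      have := congrArg Subtype.val (b.sum_repr ⟨x, hx⟩)
      simp only [Submodule.coe_sum, Submodule.coe_smul] at this
      simp only [Module.Basis.extendOfIsLattice_apply, algebraMap_smul]
      exact this.symm
    conv_rhs => rw [h1, Module.Basis.repr_sum_self]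
  · rw [← (b.extendOfIsLattice K).sum_repr x]
    refine Submodule.sum_mem _ fun i _ => ?_
    obtain ⟨r, hr⟩ := hx i
    rw [← hr, algebraMap_smul, Module.Basis.extendOfIsLattice_apply]
    exact L.smul_mem r (b i).2

lemma aux_mat (O : Type*) [CommRing O] [IsDomain O] [IsDiscreteValuationRing O]
    (K : Type*) [Field K] [Algebra O K] [IsFractionRing O K] {m n : ℕ} (hn : 0 < n)
    (A : Matrix (Fin m) (Fin m) K) (B : Matrix (Fin n) (Fin n) K) (hB : B.det = 1)
    (h : ∀ i j k l, A i j * B k l ∈ (algebraMap O K).range) (i j) :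
    A i j ∈ (algebraMap O K).range := by
  have h1 : (A i j • B).det ∈ (algebraMap O K).range := by
    rw [Matrix.det_apply]
    refine Subring.sum_mem _ fun σ _ => ?_
    rw [Units.smul_def]
    refine Subring.zsmul_mem _ (Subring.prod_mem _ fun k _ => ?_) _
    simpa using h i j (σ k) k
  rw [Matrix.det_smul, hB, mul_one, Fintype.card_fin] at h1
  obtain ⟨r, hr⟩ := h1
  obtain ⟨y, hy⟩ := IsIntegrallyClosed.exists_algebraMap_eq_of_isIntegral_pow (R := O) hn
    (x := A i j) (by rw [← hr]; exact isIntegral_algebraMap)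
  exact ⟨y, hy⟩

lemma aux_map {O K W : Type*} [CommRing O] [Field K] [Algebra O K] [AddCommGroup W] [Module K W]
    [Module O W] [IsScalarTower O K W] (L : Submodule O W) {n : ℕ} (b : Module.Basis (Fin n) K W)
    (hb : ∀ x, x ∈ L ↔ ∀ i, b.repr x i ∈ (algebraMap O K).range) (g : W →ₗ[K] W)
    (hg : ∀ i j, LinearMap.toMatrix b b g i j ∈ (algebraMap O K).range) :
    ∀ x ∈ L, g x ∈ L := by
  intro x hx
  rw [hb] at hx ⊢
  intro i
  rw [← LinearMap.toMatrix_mulVec_repr b b g x, Matrix.mulVec, dotProduct]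
  exact Subring.sum_mem _ fun j _ => Subring.mul_mem _ (hg i j) (hx j)

lemma aux_main
    (O : Type*) [CommRing O] [IsDomain O] [IsDiscreteValuationRing O]
    (K : Type*) [Field K] [Algebra O K] [IsFractionRing O K]
    (W₁ W₂ : Type*) [AddCommGroup W₁] [Module K W₁] [AddCommGroup W₂] [Module K W₂]
    [Module O W₁] [IsScalarTower O K W₁] [Module O W₂] [IsScalarTower O K W₂]
    [Nontrivial W₁] [Nontrivial W₂]
    (L₁ : Submodule O W₁) (L₂ : Submodule O W₂)
    (hL₁fg : L₁.FG) (hL₂fg : L₂.FG)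
    (hL₁span : Submodule.span K (L₁ : Set W₁) = ⊤)
    (hL₂span : Submodule.span K (L₂ : Set W₂) = ⊤)
    (Λ : Submodule O (W₁ ⊗[K] W₂))
    (hΛ : Λ = Submodule.span O {z : W₁ ⊗[K] W₂ | ∃ x ∈ L₁, ∃ y ∈ L₂, z = x ⊗ₜ[K] y})
    (g : W₁ ≃ₗ[K] W₁) (h : W₂ ≃ₗ[K] W₂) (hdet : LinearMap.det h.toLinearMap = 1)
    (hdet' : LinearMap.det h.symm.toLinearMap = 1)
    (H : ∀ x ∈ L₁, ∀ y ∈ L₂, g x ⊗ₜ[K] h y ∈ Λ)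
    (H' : ∀ x ∈ L₁, ∀ y ∈ L₂, g.symm x ⊗ₜ[K] h.symm y ∈ Λ) :
    (∀ x ∈ L₁, g x ∈ L₁) ∧ (∀ y ∈ L₂, h y ∈ L₂) := by
  obtain ⟨m, b, hb⟩ := aux_basis O K L₁ hL₁fg hL₁span
  obtain ⟨n, c, hc⟩ := aux_basis O K L₂ hL₂fg hL₂span
  have hm : 0 < m := by
    have := b.index_nonempty
    exact Fin.pos_iff_nonempty.2 this
  have hn : 0 < n := by
    have := c.index_nonempty
    exact Fin.pos_iff_nonempty.2 this
  have hbL : ∀ i, b i ∈ L₁ := fun i => (hb _).2 fun j => by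
    rw [b.repr_self, Finsupp.single_apply]; split_ifs
    exacts [Subring.one_mem _, Subring.zero_mem _]
  have hcL : ∀ i, c i ∈ L₂ := fun i => (hc _).2 fun j => by
    rw [c.repr_self, Finsupp.single_apply]; split_ifs
    exacts [Subring.one_mem _, Subring.zero_mem _]
  have key : ∀ z ∈ Λ, ∀ p, (b.tensorProduct c).repr z p ∈ (algebraMap O K).range := by
    intro z hz p
    rw [hΛ] at hz
    induction hz using Submodule.span_induction with
    | mem z hz =>
      obtain ⟨x, hx, y, hy, rfl⟩ := hz
      obtain ⟨i, j⟩ := p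
      rw [Module.Basis.tensorProduct_repr_tmul_apply]
      exact Subring.mul_mem _ ((hc _).1 hy j) ((hb _).1 hx i)
    | zero => simp
    | add x y _ _ hx hy =>
      rw [map_add, Finsupp.add_apply]
      exact Subring.add_mem _ hx hy
    | smul a x _ hx =>
      rw [← algebraMap_smul K a x, map_smul, Finsupp.smul_apply, smul_eq_mul]
      exact Subring.mul_mem _ ⟨a, rfl⟩ hx
  have ent : ∀ (g : W₁ ≃ₗ[K] W₁) (h : W₂ ≃ₗ[K] W₂),
      (∀ x ∈ L₁, ∀ y ∈ L₂, g x ⊗ₜ[K] h y ∈ Λ) → ∀ i j k l,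
      LinearMap.toMatrix b b g.toLinearMap i j * LinearMap.toMatrix c c h.toLinearMap k l
        ∈ (algebraMap O K).range := by
    intro g h H i j k l
    have := key _ (H _ (hbL j) _ (hcL l)) (i, k)
    rw [Module.Basis.tensorProduct_repr_tmul_apply] at this
    rw [LinearMap.toMatrix_apply, LinearMap.toMatrix_apply, mul_comm]
    exact this
  have hA := aux_mat O K hn _ _ (by rw [LinearMap.det_toMatrix]; exact hdet) (ent g h H)
  have hA' := aux_mat O K hn _ _ (by rw [LinearMap.det_toMatrix]; exact hdet')
    (ent g.symm h.symm H')
  refine ⟨aux_map L₁ b hb g.toLinearMap hA, aux_map L₂ c hc h.toLinearMap fun k l => ?_⟩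
  have hmul : LinearMap.toMatrix b b g.toLinearMap * LinearMap.toMatrix b b g.symm.toLinearMap
      = 1 := by
    rw [← LinearMap.toMatrix_comp, ← LinearMap.toMatrix_id b]
    congr 1
    ext x
    simp
  have h1 := congrFun (congrFun hmul ⟨0, hm⟩) ⟨0, hm⟩
  rw [Matrix.one_apply_eq, Matrix.mul_apply] at h1
  rw [← one_mul (LinearMap.toMatrix c c h.toLinearMap k l), ← h1, Finset.sum_mul]
  refine Subring.sum_mem _ fun j _ => ?_
  rw [mul_right_comm]
  exact Subring.mul_mem _ (ent g h H _ _ _ _) (hA' _ _)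

/-- Lemma on lattice decomposition: let `O` be a DVR with fraction field `K`, and let
`L₁ ⊆ W₁`, `L₂ ⊆ W₂` be finitely generated `O`-lattices (spanning the nonzero `K`-vector
spaces `W₁`, `W₂`), and let `Λ ⊆ W₁ ⊗_K W₂` be the `O`-span of the pure tensors of lattice
vectors (the image of `L₁ ⊗_O L₂`).  If `g ∈ GL(W₁)` and `h ∈ GL(W₂)` with `det h = 1`
are such that `g ⊗ h` maps `Λ` onto `Λ`, then `g` maps `L₁` onto `L₁` and `h` maps `L₂`
onto `L₂`.  Consequently, for any group `P` and homomorphism `(ρ₁, ρ₂) : P → GL(W₁) × SL(W₂)`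
whose tensor-product action preserves `Λ`, the lattices `L₁` and `L₂` are stable. -/
theorem stmt0
    (O : Type*) [CommRing O] [IsDomain O] [IsDiscreteValuationRing O]
    (K : Type*) [Field K] [Algebra O K] [IsFractionRing O K]
    (W₁ W₂ : Type*) [AddCommGroup W₁] [Module K W₁] [AddCommGroup W₂] [Module K W₂]
    [Module O W₁] [IsScalarTower O K W₁] [Module O W₂] [IsScalarTower O K W₂]
    [Nontrivial W₁] [Nontrivial W₂]
    (L₁ : Submodule O W₁) (L₂ : Submodule O W₂)
    (hL₁fg : L₁.FG) (hL₂fg : L₂.FG)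
    (hL₁span : Submodule.span K (L₁ : Set W₁) = ⊤)
    (hL₂span : Submodule.span K (L₂ : Set W₂) = ⊤)
    (Λ : Submodule O (W₁ ⊗[K] W₂))
    (hΛ : Λ = Submodule.span O {z : W₁ ⊗[K] W₂ | ∃ x ∈ L₁, ∃ y ∈ L₂, z = x ⊗ₜ[K] y}) :
    (∀ (g : W₁ ≃ₗ[K] W₁) (h : W₂ ≃ₗ[K] W₂),
        LinearMap.det h.toLinearMap = 1 →
        Submodule.map (((TensorProduct.congr g h).toLinearMap).restrictScalars O) Λ = Λ →
        Submodule.map (g.toLinearMap.restrictScalars O) L₁ = L₁ ∧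
        Submodule.map (h.toLinearMap.restrictScalars O) L₂ = L₂) ∧
    (∀ (P : Type*) [Group P],
      ∀ (ρ₁ : P →* (W₁ ≃ₗ[K] W₁)) (ρ₂ : P →* (W₂ ≃ₗ[K] W₂)),
        (∀ x : P, LinearMap.det (ρ₂ x).toLinearMap = 1) →
        (∀ x : P, Submodule.map
            (((TensorProduct.congr (ρ₁ x) (ρ₂ x)).toLinearMap).restrictScalars O) Λ = Λ) →
        ∀ x : P,
          Submodule.map ((ρ₁ x).toLinearMap.restrictScalars O) L₁ = L₁ ∧
          Submodule.map ((ρ₂ x).toLinearMap.restrictScalars O) L₂ = L₂) := by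
  have main : ∀ (g : W₁ ≃ₗ[K] W₁) (h : W₂ ≃ₗ[K] W₂),
        LinearMap.det h.toLinearMap = 1 →
        Submodule.map (((TensorProduct.congr g h).toLinearMap).restrictScalars O) Λ = Λ →
        Submodule.map (g.toLinearMap.restrictScalars O) L₁ = L₁ ∧
        Submodule.map (h.toLinearMap.restrictScalars O) L₂ = L₂ := by
    intro g h hdet hmap
    have hdet' : LinearMap.det h.symm.toLinearMap = 1 := by
      have := LinearEquiv.det_coe_symm h
      rw [this, hdet, inv_one]
    have mem : ∀ x ∈ L₁, ∀ y ∈ L₂, x ⊗ₜ[K] y ∈ Λ := fun x hx y hy => by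
      rw [hΛ]; exact Submodule.subset_span ⟨x, hx, y, hy, rfl⟩
    have H : ∀ x ∈ L₁, ∀ y ∈ L₂, g x ⊗ₜ[K] h y ∈ Λ := fun x hx y hy => by
      rw [← hmap]; exact ⟨_, mem x hx y hy, rfl⟩
    have H' : ∀ x ∈ L₁, ∀ y ∈ L₂, g.symm x ⊗ₜ[K] h.symm y ∈ Λ := fun x hx y hy => by
      have h1 := mem x hx y hy
      rw [← hmap] at h1
      obtain ⟨z, hz, hzz⟩ := h1
      have h2 : z = g.symm x ⊗ₜ[K] h.symm y := by
        apply (TensorProduct.congr g h).injective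
        rw [TensorProduct.congr_tmul, g.apply_symm_apply, h.apply_symm_apply]
        exact hzz
      rw [← h2]; exact hz
    obtain ⟨a1, a2⟩ := aux_main O K W₁ W₂ L₁ L₂ hL₁fg hL₂fg hL₁span hL₂span Λ hΛ g h hdet hdet' H H'
    obtain ⟨c1, c2⟩ := aux_main O K W₁ W₂ L₁ L₂ hL₁fg hL₂fg hL₁span hL₂span Λ hΛ g.symm h.symm
      hdet' hdet H' H
    constructor
    · apply le_antisymm
      · rintro _ ⟨x, hx, rfl⟩
        exact a1 x hx
      · exact fun x hx => ⟨g.symm x, c1 x hx, g.apply_symm_apply x⟩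
    · apply le_antisymm
      · rintro _ ⟨x, hx, rfl⟩
        exact a2 x hx
      · exact fun x hx => ⟨h.symm x, c2 x hx, h.apply_symm_apply x⟩
  exact ⟨main, fun P _ ρ₁ ρ₂ hd hm x => main _ _ (hd x) (hm x)⟩
end

section
/- Let K be a field, V a nonzero K-vector space, and r ≥ 1 an integer. If g is a K-linear automorphism of V such that the induced automorphism g^{⊗r} of the r-fold tensor power V^{⊗r} (sending v₁ ⊗ ⋯ ⊗ v_r to g(v₁) ⊗ ⋯ ⊗ g(v_r)) is the identity, then there exists λ ∈ K with λ^r = 1 and g = λ·id_V. -/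
open scoped TensorProduct

/-- If an automorphism `g` of a nonzero `K`-vector space `V` induces the identity on the
`r`-fold tensor power `V^⊗r` (`r ≥ 1`), then `g = λ·id` for some `λ ∈ K` with `λ^r = 1`. -/
theorem stmt3 (K V : Type*) [Field K] [AddCommGroup V] [Module K V] [Nontrivial V]
    (r : ℕ) (hr : 1 ≤ r) (g : V ≃ₗ[K] V)
    (hg : PiTensorProduct.map (fun _ : Fin r => g.toLinearMap)
        = (LinearMap.id : (⨂[K] _ : Fin r, V) →ₗ[K] ⨂[K] _ : Fin r, V)) :
    ∃ lam : K, lam ^ r = 1 ∧ g.toLinearMap = lam • (LinearMap.id : V →ₗ[K] V) := by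
  have key : ∀ (f : Fin r → Module.Dual K V) (m : Fin r → V),
      ∏ i, f i (g (m i)) = ∏ i, f i (m i) := by
    intro f m
    have h := congrArg (fun T => PiTensorProduct.lift
      ((MultilinearMap.mkPiAlgebra K (Fin r) K).compLinearMap f)
        (T (PiTensorProduct.tprod K m))) hg
    simpa [PiTensorProduct.map_tprod] using h
  obtain ⟨n, rfl⟩ : ∃ n, r = n + 1 := ⟨r - 1, by omega⟩
  obtain ⟨v0, hv0⟩ := exists_ne (0 : V)
  have hgv : g v0 ≠ 0 := by simpa using hv0
  obtain ⟨f, hf⟩ : ∃ f : Module.Dual K V, f (g v0) = 1 := by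
    have h : ¬ ∀ f : Module.Dual K V, f (g v0) = 0 := fun h =>
      hgv ((Module.forall_dual_apply_eq_zero_iff K _).1 h)
    push Not at h
    obtain ⟨f, hf⟩ := h
    exact ⟨(f (g v0))⁻¹ • f, by simp [hf]⟩
  have hc : ∀ v, g v = (f v0) ^ n • v := by
    intro v
    rw [← sub_eq_zero, ← Module.forall_dual_apply_eq_zero_iff K]
    intro φ
    have h := key (Fin.cons φ fun _ => f) (Fin.cons v fun _ => v0)
    simp [Fin.prod_univ_succ, hf] at h
    simp [h, mul_comm]
  refine ⟨(f v0) ^ n, ?_, ?_⟩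
  · have h1 : (f v0) ^ (n + 1) = 1 := by
      have h := key (fun _ => f) (fun _ => v0)
      simpa [hf] using h.symm
    rw [← pow_mul, mul_comm, pow_mul, h1, one_pow]
  · ext v
    simpa using hc v
end

section
/- Let R be a commutative ring in which 2 is invertible. For an R-module U, let Sym²U denote the submodule of U ⊗_R U consisting of tensors fixed by the flip u ⊗ v ↦ v ⊗ u, and let Λ²U denote the submodule of tensors negated by the flip. Let d ≥ 1 and let V₁, …, V_d be R-modules, with T = V₁ ⊗_R ⋯ ⊗_R V_d. For a subset S ⊆ {1, …, d}, let D_S denote the tensor product over R, in the order of the indices, of Sym²V_i for i ∈ S and Λ²V_i for i ∉ S. Then there are R-module isomorphisms Λ²T ≅ ⊕_{S : d−|S| odd} D_S and Sym²T ≅ ⊕_{S : d−|S| even} D_S. -/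
open scoped TensorProduct DirectSum

/-- The submodule of `U ⊗ U` consisting of tensors fixed by the flip `u ⊗ v ↦ v ⊗ u`. -/
noncomputable def symTwo (R U : Type*) [CommRing R] [AddCommGroup U] [Module R U] :
    Submodule R (U ⊗[R] U) :=
  LinearMap.ker ((TensorProduct.comm R U U).toLinearMap - LinearMap.id)

/-- The submodule of `U ⊗ U` consisting of tensors negated by the flip `u ⊗ v ↦ v ⊗ u`. -/
noncomputable def altTwo (R U : Type*) [CommRing R] [AddCommGroup U] [Module R U] :
    Submodule R (U ⊗[R] U) :=
  LinearMap.ker ((TensorProduct.comm R U U).toLinearMap + LinearMap.id)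

namespace Aux9

lemma key {R : Type*} [CommRing R] {ι : Type*} [Fintype ι] [DecidableEq ι]
    {M : Type*} [AddCommGroup M] [Module R M] (D : ι → Type*)
    [∀ S, AddCommMonoid (D S)] [∀ S, Module R (D S)]
    (I : ∀ S, D S →ₗ[R] M) (P : ∀ S, M →ₗ[R] D S)
    (h1 : ∀ S x, P S (I S x) = x) (h0 : ∀ S S' x, S ≠ S' → P S (I S' x) = 0)
    (hs : ∀ x, ∑ S, I S (P S x) = x) (p : ι → Prop) (N : Submodule R M)
    (hN1 : ∀ S, p S → ∀ x, I S x ∈ N) (hN2 : ∀ S, ¬ p S → ∀ x ∈ N, P S x = 0) :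
    Nonempty (N ≃ₗ[R] ⨁ S : {S : ι // p S}, D S) := by
  classical
  let f : N →ₗ[R] ⨁ S : {S : ι // p S}, D S :=
    ∑ S : {S : ι // p S}, DirectSum.lof R _ (fun S : {S : ι // p S} => D S) S ∘ₗ P S ∘ₗ N.subtype
  let g : (⨁ S : {S : ι // p S}, D S) →ₗ[R] N :=
    DirectSum.toModule R _ _ (fun S => (I S).codRestrict N (hN1 S S.2))
  refine ⟨LinearEquiv.ofLinearMap f g ?_ ?_⟩
  · refine DirectSum.linearMap_ext R fun S => LinearMap.ext fun x => ?_
    simp only [f, g, LinearMap.comp_apply, LinearMap.sum_apply, DirectSum.toModule_lof,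
      LinearMap.id_apply, Submodule.subtype_apply, LinearMap.codRestrict_apply]
    rw [Finset.sum_eq_single S]
    · rw [h1]
    · intro S' _ hne
      rw [h0 _ _ _ (fun h => hne (Subtype.ext h)), map_zero]
    · simp
  · refine LinearMap.ext fun x => Subtype.ext ?_
    simp only [f, g, LinearMap.comp_apply, LinearMap.sum_apply, map_sum, DirectSum.toModule_lof,
      LinearMap.id_apply, Submodule.subtype_apply, LinearMap.codRestrict_apply,
      AddSubmonoidClass.coe_finsetSum]
    conv_rhs => rw [← hs (x : M)]
    have hf := Finset.sum_subtype (p := p) (F := inferInstance) (Finset.univ.filter p) (by simp)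
      (fun S => I S (P S (x : M)))
    rw [← hf, Finset.sum_filter_of_ne]
    intro S _ hne
    by_contra hp
    exact hne (by rw [hN2 S hp x x.2, map_zero])

section equiv

variable {R : Type*} [CommRing R] {ι : Type*} [Fintype ι] [DecidableEq ι] (V : ι → Type*)
  [∀ i, AddCommGroup (V i)] [∀ i, Module R (V i)]

noncomputable def fwd : (⨂[R] i, V i) ⊗[R] (⨂[R] i, V i) →ₗ[R] ⨂[R] i, (V i ⊗[R] V i) :=
  TensorProduct.lift (PiTensorProduct.map₂ fun i => TensorProduct.mk R (V i) (V i))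

lemma fwd_tmul (x y : ∀ i, V i) :
    fwd (R := R) V (PiTensorProduct.tprod R x ⊗ₜ PiTensorProduct.tprod R y) =
      PiTensorProduct.tprod R fun i => x i ⊗ₜ y i := by
  simp [fwd, PiTensorProduct.map₂_tprod_tprod]

lemma exists_bwd_aux (A : ι → Type*) [∀ i, CommRing (A i)] [∀ i, Algebra R (A i)]
    (a : ∀ i, V i →ₗ[R] A i) (b : ∀ i, A i →ₗ[R] V i) (hab : ∀ i x, b i (a i x) = x) :
    ∃ g : (⨂[R] i, (V i ⊗[R] V i)) →ₗ[R] (⨂[R] i, V i) ⊗[R] (⨂[R] i, V i),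
      ∀ x y : ∀ i, V i, g (PiTensorProduct.tprod R fun i => x i ⊗ₜ y i) =
        PiTensorProduct.tprod R x ⊗ₜ PiTensorProduct.tprod R y := by
  let j : ∀ i, V i →ₗ[R] ⨂[R] i, A i := fun i =>
    (PiTensorProduct.singleAlgHom (R := R) (A := A) i).toLinearMap ∘ₗ a i
  have hj : ∀ x : ∀ i, V i, ∏ i, j i (x i) = PiTensorProduct.tprod R fun i => a i (x i) := by
    intro x
    have : ∀ i, j i (x i) = PiTensorProduct.tprod R (Pi.mulSingle i (a i (x i))) := fun i => rfl
    simp_rw [this]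
    rw [← PiTensorProduct.tprod_prod]
    congr 1
    exact Finset.univ_prod_mulSingle (fun i => a i (x i))
  let G : MultilinearMap R (fun i => V i ⊗[R] V i) ((⨂[R] i, A i) ⊗[R] (⨂[R] i, A i)) :=
    (MultilinearMap.mkPiAlgebra R ι _).compLinearMap fun i => TensorProduct.map (j i) (j i)
  refine ⟨TensorProduct.map (PiTensorProduct.map b) (PiTensorProduct.map b) ∘ₗ
    PiTensorProduct.lift G, fun x y => ?_⟩
  have : ∀ s : Finset ι, ∏ i ∈ s, (j i (x i) ⊗ₜ[R] j i (y i)) =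
      (∏ i ∈ s, j i (x i)) ⊗ₜ[R] (∏ i ∈ s, j i (y i)) := by
    intro s
    induction s using Finset.induction_on with
    | empty => simp [Algebra.TensorProduct.one_def]
    | insert i s hi ih => simp [Finset.prod_insert hi, ih]
  simp [G, this, hj, hab]

lemma exists_bwd :
    ∃ g : (⨂[R] i, (V i ⊗[R] V i)) →ₗ[R] (⨂[R] i, V i) ⊗[R] (⨂[R] i, V i),
      ∀ x y : ∀ i, V i, g (PiTensorProduct.tprod R fun i => x i ⊗ₜ y i) =
        PiTensorProduct.tprod R x ⊗ₜ PiTensorProduct.tprod R y := by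
  letI : ∀ i, Module Rᵐᵒᵖ (V i) := fun i =>
    Module.compHom (V i) ((RingHom.id R).fromOpposite fun _ _ => mul_comm _ _)
  haveI : ∀ i, IsCentralScalar R (V i) := fun i => ⟨fun _ _ => rfl⟩
  exact exists_bwd_aux V (fun i => TrivSqZeroExt R (V i))
    (fun i => TrivSqZeroExt.inrHom R (V i)) (fun i => TrivSqZeroExt.sndHom R (V i))
    (fun i x => by simp)

lemma ext_pi {N : Type*} [AddCommGroup N] [Module R N]
    {f g : (⨂[R] i, (V i ⊗[R] V i)) →ₗ[R] N}
    (h : ∀ x y : ∀ i, V i, f (PiTensorProduct.tprod R fun i => x i ⊗ₜ y i) =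
      g (PiTensorProduct.tprod R fun i => x i ⊗ₜ y i)) : f = g := by
  refine PiTensorProduct.ext_of_span_eq_top (γ := fun i => V i × V i)
    (g := fun i (j : V i × V i) => j.1 ⊗ₜ[R] j.2) (fun i => ?_)
    (fun j => h (fun i => (j i).1) (fun i => (j i).2))
  rw [← TensorProduct.span_tmul_eq_top R (V i) (V i)]
  congr 1
  ext t
  simp

lemma ext_two {N : Type*} [AddCommGroup N] [Module R N]
    {f g : (⨂[R] i, V i) ⊗[R] (⨂[R] i, V i) →ₗ[R] N}
    (h : ∀ x y : ∀ i, V i, f (PiTensorProduct.tprod R x ⊗ₜ PiTensorProduct.tprod R y) =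
      g (PiTensorProduct.tprod R x ⊗ₜ PiTensorProduct.tprod R y)) : f = g := by
  refine TensorProduct.ext (PiTensorProduct.ext (MultilinearMap.ext fun x => ?_))
  refine PiTensorProduct.ext (MultilinearMap.ext fun y => ?_)
  exact h x y

lemma exists_equiv :
    ∃ e : ((⨂[R] i, V i) ⊗[R] (⨂[R] i, V i)) ≃ₗ[R] ⨂[R] i, (V i ⊗[R] V i),
      ∀ t, e (TensorProduct.comm R _ _ t) =
        PiTensorProduct.map (fun i => (TensorProduct.comm R (V i) (V i)).toLinearMap) (e t) := by
  obtain ⟨g, hg⟩ := exists_bwd (R := R) V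
  refine ⟨LinearEquiv.ofLinearMap (fwd V) g ?_ ?_, fun t => ?_⟩
  · refine ext_pi V fun x y => ?_
    simp [hg, fwd_tmul]
  · refine ext_two V fun x y => ?_
    simp [hg, fwd_tmul]
  · have : fwd (R := R) V ∘ₗ (TensorProduct.comm R _ _).toLinearMap =
        PiTensorProduct.map (fun i => (TensorProduct.comm R (V i) (V i)).toLinearMap) ∘ₗ
          fwd V := by
      refine ext_two V fun x y => ?_
      simp [fwd_tmul]
    exact LinearMap.congr_fun this t

end equiv

section factor

variable {R : Type*} [CommRing R] {U : Type*} [AddCommGroup U] [Module R U]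

/-- The sign attached to a proposition. -/
def sg (R : Type*) [CommRing R] (q : Prop) [Decidable q] : R := if q then 1 else -1

lemma sg_mul_self (q : Prop) [Decidable q] : sg R q * sg R q = 1 := by
  unfold sg; split_ifs <;> simp

lemma mem_E (q : Prop) [Decidable q] (x : U ⊗[R] U) :
    x ∈ (if q then symTwo R U else altTwo R U) ↔ TensorProduct.comm R U U x = sg R q • x := by
  unfold sg
  split_ifs
  · simp [symTwo, sub_eq_zero]
  · simp [altTwo, add_eq_zero_iff_eq_neg]

lemma mem_alt (x : U ⊗[R] U) :
    x ∈ altTwo R U ↔ TensorProduct.comm R U U x = (-1 : R) ^ 1 • x := by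
  simp [altTwo, add_eq_zero_iff_eq_neg]

variable (R U) in
/-- The averaging map with sign. -/
noncomputable def av (c : R) (q : Prop) [Decidable q] : U ⊗[R] U →ₗ[R] U ⊗[R] U :=
  c • (LinearMap.id + sg R q • (TensorProduct.comm R U U).toLinearMap)

lemma av_apply (c : R) (q : Prop) [Decidable q] (x : U ⊗[R] U) :
    av R U c q x = c • (x + sg R q • TensorProduct.comm R U U x) := rfl

lemma comm_comm_apply (x : U ⊗[R] U) :
    TensorProduct.comm R U U (TensorProduct.comm R U U x) = x :=
  (TensorProduct.comm R U U).symm_apply_apply x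

lemma av_comm (c : R) (q : Prop) [Decidable q] (x : U ⊗[R] U) :
    av R U c q (TensorProduct.comm R U U x) = sg R q • av R U c q x := by
  rw [av_apply, av_apply, comm_comm_apply, smul_comm, smul_add (sg R q), smul_smul, sg_mul_self,
    one_smul, add_comm]

lemma comm_av (c : R) (q : Prop) [Decidable q] (x : U ⊗[R] U) :
    TensorProduct.comm R U U (av R U c q x) = sg R q • av R U c q x := by
  rw [← av_comm, av_apply, av_apply]
  simp

variable (R U) in
/-- The projection onto the eigen-submodule. -/
noncomputable def pr (c : R) (q : Prop) [Decidable q] :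
    U ⊗[R] U →ₗ[R] ↥(if q then symTwo R U else altTwo R U) :=
  (av R U c q).codRestrict _ fun x => (mem_E q _).2 (comm_av c q x)

lemma coe_pr (c : R) (q : Prop) [Decidable q] (x : U ⊗[R] U) :
    (pr R U c q x : U ⊗[R] U) = av R U c q x := rfl

lemma pr_comm (c : R) (q : Prop) [Decidable q] (x : U ⊗[R] U) :
    pr R U c q (TensorProduct.comm R U U x) = sg R q • pr R U c q x :=
  Subtype.ext (av_comm c q x)

lemma pr_coe (c : R) (hc : c * 2 = 1) (q : Prop) [Decidable q]
    (x : ↥(if q then symTwo R U else altTwo R U)) : pr R U c q (x : U ⊗[R] U) = x := by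
  refine Subtype.ext ?_
  rw [coe_pr, av_apply, (mem_E q _).1 x.2, smul_smul, sg_mul_self, one_smul, ← two_smul R,
    smul_smul, hc, one_smul]

lemma pr_coe_ne (c : R) (q q' : Prop) [Decidable q] [Decidable q'] (h : ¬ (q ↔ q'))
    (x : ↥(if q' then symTwo R U else altTwo R U)) : pr R U c q (x : U ⊗[R] U) = 0 := by
  refine Subtype.ext ?_
  have : sg R q * sg R q' = -1 := by
    unfold sg; split_ifs <;> first | (exfalso; tauto) | simp
  rw [coe_pr, av_apply, (mem_E q' _).1 x.2, smul_smul, this]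
  simp

end factor

section main

variable {R : Type*} [CommRing R] {d : ℕ} (V : Fin d → Type*)
  [∀ i, AddCommGroup (V i)] [∀ i, Module R (V i)]

lemma prod_sg (S : Finset (Fin d)) : ∏ i, sg R (i ∈ S) = (-1) ^ (d - S.card) := by
  unfold sg
  rw [Finset.prod_ite]
  simp [Finset.filter_not, Finset.card_sdiff, ← Finset.compl_eq_univ_sdiff, Finset.card_compl]

lemma main (h2 : IsUnit (2 : R)) (k : ℕ) (p : ℕ → Prop)
    (hp : ∀ n, p n → (-1 : R) ^ n = (-1) ^ k) (hp' : ∀ n, ¬ p n → (-1 : R) ^ n = - (-1) ^ k)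
    (N : Submodule R ((⨂[R] i, V i) ⊗[R] (⨂[R] i, V i)))
    (hN : ∀ x, x ∈ N ↔ TensorProduct.comm R _ _ x = (-1 : R) ^ k • x) :
    Nonempty (N ≃ₗ[R] ⨁ S : {S : Finset (Fin d) // p (d - S.card)},
          ⨂[R] i : Fin d,
            ↥(if i ∈ (S : Finset (Fin d)) then symTwo R (V i) else altTwo R (V i))) := by
  obtain ⟨c, hc⟩ := h2.exists_left_inv
  obtain ⟨e, he⟩ := exists_equiv (R := R) V
  let τ := PiTensorProduct.map (fun i => (TensorProduct.comm R (V i) (V i)).toLinearMap)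
  let D : Finset (Fin d) → Type _ := fun S => ⨂[R] i : Fin d,
            ↥(if i ∈ S then symTwo R (V i) else altTwo R (V i))
  let I : ∀ S : Finset (Fin d), (⨂[R] i : Fin d,
            ↥(if i ∈ S then symTwo R (V i) else altTwo R (V i))) →ₗ[R] _ := fun S =>
    PiTensorProduct.map fun i => (if i ∈ S then symTwo R (V i) else altTwo R (V i)).subtype
  let P : ∀ S : Finset (Fin d), _ →ₗ[R] (⨂[R] i : Fin d,
            ↥(if i ∈ S then symTwo R (V i) else altTwo R (V i))) := fun S =>
    PiTensorProduct.map fun i => pr R (V i) c (i ∈ S)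
  have hτI : ∀ S, τ ∘ₗ I S = (-1 : R) ^ (d - S.card) • I S := by
    intro S
    refine PiTensorProduct.ext (MultilinearMap.ext fun x => ?_)
    simp only [τ, I, LinearMap.compMultilinearMap_apply, LinearMap.comp_apply,
      LinearMap.smul_apply, PiTensorProduct.map_tprod]
    rw [← prod_sg, ← MultilinearMap.map_smul_univ]
    congr 1
    ext i
    exact (mem_E _ _).1 (x i).2
  have hPτ : ∀ S, P S ∘ₗ τ = (-1 : R) ^ (d - S.card) • P S := by
    intro S
    refine PiTensorProduct.ext (MultilinearMap.ext fun x => ?_)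
    simp only [τ, P, LinearMap.compMultilinearMap_apply, LinearMap.comp_apply,
      LinearMap.smul_apply, PiTensorProduct.map_tprod]
    rw [← prod_sg, ← MultilinearMap.map_smul_univ]
    congr 1
    ext i : 1
    exact pr_comm _ _ _
  have h1 : ∀ S, P S ∘ₗ I S = LinearMap.id := by
    intro S
    refine PiTensorProduct.ext (MultilinearMap.ext fun x => ?_)
    simp only [I, P, LinearMap.compMultilinearMap_apply, LinearMap.comp_apply,
      LinearMap.id_apply, PiTensorProduct.map_tprod]
    congr 1
    ext i : 1
    exact pr_coe _ hc _ _
  have h0 : ∀ S S', S ≠ S' → P S ∘ₗ I S' = 0 := by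
    intro S S' hne
    refine PiTensorProduct.ext (MultilinearMap.ext fun x => ?_)
    simp only [I, P, LinearMap.compMultilinearMap_apply, LinearMap.comp_apply,
      LinearMap.zero_apply, PiTensorProduct.map_tprod]
    obtain ⟨i, hi⟩ : ∃ i, ¬ (i ∈ S ↔ i ∈ S') := by
      by_contra hcon
      push Not at hcon
      exact hne (Finset.ext hcon)
    exact MultilinearMap.map_coord_zero _ i (pr_coe_ne _ _ _ hi _)
  have hs : ∑ S, I S ∘ₗ P S = LinearMap.id := by
    refine PiTensorProduct.ext (MultilinearMap.ext fun x => ?_)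
    simp only [I, P, LinearMap.compMultilinearMap_apply, LinearMap.comp_apply,
      LinearMap.id_apply, PiTensorProduct.map_tprod, LinearMap.sum_apply]
    have hx : x = (fun i => av R (V i) c True (x i)) + (fun i => av R (V i) c False (x i)) := by
      ext i
      simp only [Pi.add_apply, av_apply, sg]
      rw [← smul_add]
      simp only [if_true, if_false, one_smul, neg_smul]
      rw [add_add_add_comm, add_neg_cancel, add_zero, ← two_smul R, smul_smul, hc, one_smul]
    conv_rhs => rw [hx, MultilinearMap.map_add_univ]
    refine Finset.sum_congr rfl fun S _ => ?_
    congr 1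
    ext i
    by_cases hi : i ∈ S <;> simp [hi, coe_pr, av_apply, sg]
  refine key (M := (⨂[R] i, V i) ⊗[R] (⨂[R] i, V i)) D
    (fun S => e.symm.toLinearMap ∘ₗ I S) (fun S => P S ∘ₗ e.toLinearMap)
    ?_ ?_ ?_ (fun S => p (d - S.card)) N ?_ ?_
  · intro S x
    simpa using LinearMap.congr_fun (h1 S) x
  · intro S S' x hne
    simpa using LinearMap.congr_fun (h0 S S' hne) x
  · intro x
    have := LinearMap.congr_fun hs (e x)
    apply e.injective
    simpa using this
  · intro S hS x
    rw [hN]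
    apply e.injective
    rw [he]
    have := LinearMap.congr_fun (hτI S) x
    rw [hp _ hS] at this
    simpa using this
  · intro S hS x hx
    rw [hN] at hx
    have := LinearMap.congr_fun (hPτ S) (e x)
    rw [hp' _ hS, LinearMap.comp_apply, ← he, hx, map_smul, map_smul, LinearMap.smul_apply] at this
    have this2 : ((2 : R) * (-1) ^ k) • P S (e x) = 0 := by
      rw [two_mul, add_smul]
      nth_rw 1 [this]
      rw [← add_smul, neg_add_cancel, zero_smul]
    have hu : IsUnit ((2 : R) * (-1) ^ k) := h2.mul (isUnit_one.neg.pow k)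
    exact hu.smul_eq_zero.1 this2

end main

end Aux9

/-- Over a commutative ring in which `2` is invertible, for `T = V₁ ⊗ ⋯ ⊗ V_d` one has
`Λ²T ≅ ⊕_{S : d - |S| odd} D_S` and `Sym²T ≅ ⊕_{S : d - |S| even} D_S`, where
`D_S = ⊗_i (Sym²Vᵢ if i ∈ S else Λ²Vᵢ)` in the order of the indices. -/
theorem stmt9 (R : Type*) [CommRing R] (h2 : IsUnit (2 : R))
    (d : ℕ) (hd : 1 ≤ d) (V : Fin d → Type*)
    [∀ i, AddCommGroup (V i)] [∀ i, Module R (V i)] :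
    Nonempty ((altTwo R (⨂[R] i, V i)) ≃ₗ[R]
        ⨁ S : {S : Finset (Fin d) // Odd (d - S.card)},
          ⨂[R] i : Fin d,
            ↥(if i ∈ (S : Finset (Fin d)) then symTwo R (V i) else altTwo R (V i))) ∧
    Nonempty ((symTwo R (⨂[R] i, V i)) ≃ₗ[R]
        ⨁ S : {S : Finset (Fin d) // Even (d - S.card)},
          ⨂[R] i : Fin d,
            ↥(if i ∈ (S : Finset (Fin d)) then symTwo R (V i) else altTwo R (V i))) := by
  refine ⟨Aux9.main V h2 1 Odd ?_ ?_ _ ?_, Aux9.main V h2 0 Even ?_ ?_ _ ?_⟩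
  · intro n hn
    simp [hn.neg_one_pow]
  · intro n hn
    simp [(Nat.not_odd_iff_even.1 hn).neg_one_pow]
  · intro x
    exact Aux9.mem_alt x
  · intro n hn
    simp [hn.neg_one_pow]
  · intro n hn
    simp [(Nat.not_even_iff_odd.1 hn).neg_one_pow]
  · intro x
    simp [symTwo, sub_eq_zero]
end

section
/- Let K be a field and let V₁ and V₂ be nonzero K-vector spaces. Let A be a K-linear endomorphism of V₁ and B a K-linear endomorphism of V₂. If A ⊗ id_{V₂} + id_{V₁} ⊗ B = 0 as an endomorphism of V₁ ⊗_K V₂, then there exists c ∈ K such that A = c·id_{V₁} and B = −c·id_{V₂}. In particular, if moreover A and B are nilpotent, then A = 0 and B = 0. -/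
open TensorProduct

/-- If the Kronecker sum `A ⊗ id + id ⊗ B` of endomorphisms of nonzero vector spaces
`V₁`, `V₂` vanishes, then `A = c·id` and `B = -c·id` for some scalar `c`; in particular
if `A` and `B` are nilpotent then `A = 0` and `B = 0`. -/
theorem stmt12 (K V₁ V₂ : Type*) [Field K]
    [AddCommGroup V₁] [Module K V₁] [AddCommGroup V₂] [Module K V₂]
    [Nontrivial V₁] [Nontrivial V₂]
    (A : V₁ →ₗ[K] V₁) (B : V₂ →ₗ[K] V₂)
    (h : TensorProduct.map A (LinearMap.id : V₂ →ₗ[K] V₂)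
        + TensorProduct.map (LinearMap.id : V₁ →ₗ[K] V₁) B = 0) :
    (∃ c : K, A = c • (LinearMap.id : V₁ →ₗ[K] V₁)
        ∧ B = (-c) • (LinearMap.id : V₂ →ₗ[K] V₂)) ∧
    (IsNilpotent A → IsNilpotent B → A = 0 ∧ B = 0) := by
  have key : ∀ x y, A x ⊗ₜ[K] y + x ⊗ₜ[K] B y = 0 := fun x y => by
    simpa using LinearMap.congr_fun h (x ⊗ₜ[K] y)
  obtain ⟨v, hv⟩ := exists_ne (0 : V₁)
  obtain ⟨w, hw⟩ := exists_ne (0 : V₂)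
  obtain ⟨f, hf⟩ := Module.Projective.exists_dual_eq_one K hv
  obtain ⟨g, hg⟩ := Module.Projective.exists_dual_eq_one K hw
  have hA : ∀ x, A x = (-g (B w)) • x := fun x => by
    have := congrArg (fun t => TensorProduct.rid K V₁ (TensorProduct.map LinearMap.id g t)) (key x w)
    simp [hg] at this
    rw [neg_smul]
    exact eq_neg_of_add_eq_zero_left this
  have hB : ∀ y, B y = (-(-g (B w))) • y := fun y => by
    have := congrArg (fun t => TensorProduct.lid K V₂ (TensorProduct.map f LinearMap.id t)) (key v y)
    simp only [map_add, TensorProduct.map_tmul, TensorProduct.lid_tmul, LinearMap.id_apply, hf,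
      one_smul, map_zero, hA, map_smul, smul_eq_mul, mul_one] at this
    rw [neg_smul]
    exact eq_neg_of_add_eq_zero_right this
  generalize -g (B w) = c at hA hB
  have hA' : A = c • (LinearMap.id : V₁ →ₗ[K] V₁) := LinearMap.ext hA
  have hB' : B = (-c) • (LinearMap.id : V₂ →ₗ[K] V₂) := LinearMap.ext hB
  refine ⟨⟨c, hA', hB'⟩, ?_⟩
  rintro ⟨n, hn⟩ -
  have hp : ∀ m : ℕ, (A ^ m) v = c ^ m • v := fun m => by
    induction m with
    | zero => simp
    | succ k ih => rw [pow_succ', Module.End.mul_apply, ih, hA, smul_smul, pow_succ']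
  have h0 : c ^ n • v = 0 := by rw [← hp, hn]; rfl
  have hc : c = 0 := eq_zero_of_pow_eq_zero ((smul_eq_zero.mp h0).resolve_right hv)
  subst hc
  exact ⟨by simpa using hA', by simpa using hB'⟩
end

section
/- Let K be an algebraically closed field and let V₁ and V₂ be nonzero finite-dimensional K-vector spaces. Call an endomorphism of a finite-dimensional K-vector space diagonalizable if the sum of its eigenspaces is the whole space. Let A be an endomorphism of V₁ and B an endomorphism of V₂. If the Kronecker sum A ⊗ id_{V₂} + id_{V₁} ⊗ B is a diagonalizable endomorphism of V₁ ⊗_K V₂, then A and B are each diagonalizable. -/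
open TensorProduct

theorem aux_push {K W V : Type*} [Field K] [AddCommGroup W] [Module K W]
    [AddCommGroup V] [Module K V] (S : Module.End K W) (A : Module.End K V) (b : K)
    (f : W →ₗ[K] V) (hf : Function.Surjective f)
    (hc : ∀ w, f (S w) = A (f w) + b • f w)
    (h : (⨆ μ : K, Module.End.eigenspace S μ) = ⊤) :
    (⨆ μ : K, Module.End.eigenspace A μ) = ⊤ := by
  rw [eq_top_iff, ← LinearMap.range_eq_top.2 hf, LinearMap.range_eq_map, ← h,
    Submodule.map_iSup]
  refine iSup_le fun μ => le_trans ?_ (le_iSup _ (μ - b))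
  rintro _ ⟨w, hw, rfl⟩
  have hw' : S w = μ • w := Module.End.mem_eigenspace_iff.1 hw
  rw [Module.End.mem_eigenspace_iff, sub_smul, eq_sub_iff_add_eq, ← hc, hw', map_smul]

theorem aux_dual {K V : Type*} [Field K] [IsAlgClosed K] [AddCommGroup V] [Module K V]
    [FiniteDimensional K V] [Nontrivial V] (B : Module.End K V) :
    ∃ (b : K) (φ : V →ₗ[K] K) (v : V), φ v = 1 ∧ ∀ x, φ (B x) = b * φ x := by
  obtain ⟨b, hb⟩ := Module.End.exists_eigenvalue
    (Module.Dual.transpose (R := K) B : Module.End K (Module.Dual K V))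
  obtain ⟨φ, hφ⟩ := hb.exists_hasEigenvector
  have h1 := hφ.apply_eq_smul
  obtain ⟨v, hv⟩ : ∃ v, φ v ≠ 0 := by
    by_contra! hh
    exact hφ.2 (LinearMap.ext hh)
  refine ⟨b, φ, (φ v)⁻¹ • v, by simp [hv], fun x => ?_⟩
  exact LinearMap.congr_fun h1 x

/-- If the Kronecker sum `A ⊗ id + id ⊗ B` of endomorphisms of nonzero finite-dimensional
vector spaces over an algebraically closed field is diagonalizable (the sum of its
eigenspaces is everything), then `A` and `B` are each diagonalizable. -/
theorem stmt13 (K V₁ V₂ : Type*) [Field K] [IsAlgClosed K]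
    [AddCommGroup V₁] [Module K V₁] [AddCommGroup V₂] [Module K V₂]
    [FiniteDimensional K V₁] [FiniteDimensional K V₂]
    [Nontrivial V₁] [Nontrivial V₂]
    (A : Module.End K V₁) (B : Module.End K V₂)
    (h : (⨆ μ : K, Module.End.eigenspace
        (TensorProduct.map (A : V₁ →ₗ[K] V₁) (LinearMap.id : V₂ →ₗ[K] V₂)
          + TensorProduct.map (LinearMap.id : V₁ →ₗ[K] V₁) (B : V₂ →ₗ[K] V₂)) μ) = ⊤) :
    (⨆ μ : K, Module.End.eigenspace A μ) = ⊤ ∧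
    (⨆ μ : K, Module.End.eigenspace B μ) = ⊤ := by
  constructor
  · obtain ⟨b, φ, v, hv, hφ⟩ := aux_dual B
    refine aux_push _ A b
      ((TensorProduct.rid K V₁).toLinearMap ∘ₗ TensorProduct.map LinearMap.id φ)
      (fun x => ⟨x ⊗ₜ v, by simp [hv]⟩) (fun w => ?_) h
    induction w with
    | zero => simp
    | tmul x y => simp [hφ, mul_smul]
    | add x y hx hy => simp only [map_add, smul_add, hx, hy]; abel
  · obtain ⟨b, φ, v, hv, hφ⟩ := aux_dual A
    refine aux_push _ B b
      ((TensorProduct.lid K V₂).toLinearMap ∘ₗ TensorProduct.map φ LinearMap.id)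
      (fun x => ⟨v ⊗ₜ x, by simp [hv]⟩) (fun w => ?_) h
    induction w with
    | zero => simp
    | tmul x y => simp [hφ, mul_smul, add_comm]
    | add x y hx hy => simp only [map_add, smul_add, hx, hy]; abel
end
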